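/- Let M be a smooth manifold, Φ ∈ End(TM) with Id + Φ invertible, and suppose Φ corresponds to a direct sum decomposition TM = ξ ⊕ ζ via Φ = 0 on ξ, Φ = Id on ζ with both ξ and ζ integrable. Then the deformed differential d_Φ = R_Φ d R_Φ^{-1} (where R_Φ = Id + Φ acts on forms slotwise) satisfies [d, d_Φ] = 0, where [·,·] is the graded commutator of degree-1 derivations, i.e. d d_Φ + d_Φ d = 0. -/

import Mathlib

namespace Stmt19

open scoped BigOperators

variable {A : Type*} [CommRing A] [Algebra ℝ A]

/-- Degree-`p` forms, modelled as `A`-valued maps on `p`-tuples of vector fields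
(derivations of the function algebra `A`); alternation and `A`-multilinearity
are imposed as hypotheses in the theorem. -/
abbrev Form (A : Type*) [CommRing A] [Algebra ℝ A] (p : ℕ) :=
  (Fin p → Derivation ℝ A A) → A

/-- The exterior derivative on forms, given by the global Koszul formula. -/
def koszulD {p : ℕ} (σ : Form A p) : Form A (p + 1) := fun v =>
  (∑ i : Fin (p + 1), ((-1 : ℤ) ^ (i : ℕ)) • (v i) (σ (v ∘ i.succAbove)))
    + ∑ j : Fin (p + 1), ∑ i : Fin (p + 1),
        if h : (i : ℕ) < (j : ℕ) then
          ((-1 : ℤ) ^ (j : ℕ)) •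
            σ (Function.update (v ∘ j.succAbove)
                ⟨(i : ℕ), lt_of_lt_of_le h (Nat.lt_succ_iff.mp j.isLt)⟩
                ⁅v i, v j⁆)
        else 0

/-- The slotwise action of a map `T : TM → TM` on forms:
`(Tσ)(V₁,…,V_p) = σ(TV₁,…,TV_p)`. -/
def slotwise {p : ℕ} (T : Derivation ℝ A A → Derivation ℝ A A)
    (σ : Form A p) : Form A p :=
  fun v => σ fun k => T (v k)

/-!
Every operator on forms used here is determined by its commutation with the contractions `ι_X`
(currying in the first slot), so identities between them follow by induction on the degree from
Cartan's formula `ι_X ∘ d = ℒ_X - d ∘ ι_X`; this makes sense on any Lie algebra `L` with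
coefficients in a Lie module. If the Nijenhuis torsion of `Φ` vanishes, then
`(1 + Φ)⁻¹ ∘ ad (X + Φ X) ∘ (1 + Φ) = ad X + ad (Φ X) + [ad X, Φ]`, and contracting
`d_Φ = R_Φ ∘ d ∘ R_Φ⁻¹` with `X` gives `d_Φ = d + [i_Φ, d]`, where `i_Φ` is the insertion
derivation. Since `d² = 0`, both summands anticommute with `d`. The projection attached to a
decomposition into two Lie subalgebras has no torsion.
-/

section AlternatingMaps

variable {R L M : Type*} [CommRing R] [AddCommGroup L] [Module R L] [AddCommGroup M] [Module R M]
  {n : ℕ}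

/-- The alternating map underlying a function that is linear in each slot and vanishes on tuples
with a repeated entry. -/
def alternatingMapOfSmulAdd {ι : Type*} [DecidableEq ι] (f : (ι → L) → M)
    (h_lin : ∀ (u : ι → L) (k : ι) (c : R) (x y : L),
      f (Function.update u k (c • x + y)) =
        c • f (Function.update u k x) + f (Function.update u k y))
    (h_alt : ∀ (u : ι → L) (k l : ι), k ≠ l → u k = u l → f u = 0) : L [⋀^ι]→ₗ[R] M where
  toMultilinearMap := MultilinearMap.mk' f
    (fun u k x y => by simpa using h_lin u k 1 x y)
    (fun u k c x => by
      have h_zero : f (Function.update u k 0) = 0 := by simpa using h_lin u k 1 0 0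
      simpa [h_zero] using h_lin u k c x 0)
  map_eq_zero_of_eq' u k l hkl hne := h_alt u k l hne hkl

@[simp]
lemma coe_alternatingMapOfSmulAdd {ι : Type*} [DecidableEq ι] (f : (ι → L) → M)
    (h_lin : ∀ (u : ι → L) (k : ι) (c : R) (x y : L),
      f (Function.update u k (c • x + y)) =
        c • f (Function.update u k x) + f (Function.update u k y))
    (h_alt : ∀ (u : ι → L) (k l : ι), k ≠ l → u k = u l → f u = 0) :
    ⇑(alternatingMapOfSmulAdd f h_lin h_alt) = f :=
  rfl

lemma ext_curryLeft {σ τ : L [⋀^Fin (n + 1)]→ₗ[R] M}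
    (h : ∀ X, σ.curryLeft X = τ.curryLeft X) : σ = τ := by
  ext v
  simpa [Matrix.vecCons] using DFunLike.congr_fun (h (v 0)) (Fin.tail v)

lemma curryLeft_sub (σ τ : L [⋀^Fin (n + 1)]→ₗ[R] M) :
    (σ - τ).curryLeft = σ.curryLeft - τ.curryLeft :=
  map_sub AlternatingMap.curryLeftLinearMap σ τ

lemma sub_compLinearMap {ι : Type*} (σ τ : L [⋀^ι]→ₗ[R] M) (T : Module.End R L) :
    (σ - τ).compLinearMap T = σ.compLinearMap T - τ.compLinearMap T :=
  rfl

lemma curryLeft_apply_eq_zero_of_eq (σ : L [⋀^Fin (n + 1)]→ₗ[R] M) {X : L} {v : Fin n → L}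
    {k : Fin n} (hk : v k = X) : σ.curryLeft X v = 0 :=
  σ.map_eq_zero_of_eq (Matrix.vecCons X v) (i := k.succ) (j := 0) (by simp [hk])
    (Fin.succ_ne_zero k)

lemma apply_eq_zero_of_curryLeft_eq_zero {σ : L [⋀^Fin (n + 1)]→ₗ[R] M} {X : L}
    (h : σ.curryLeft X = 0) {v : Fin (n + 1) → L} {k : Fin (n + 1)} (hk : v k = X) :
    σ v = 0 := by
  have h_cons : σ (Matrix.vecCons X (k.removeNth v)) = 0 := by
    rw [← AlternatingMap.curryLeft_apply_apply, h, AlternatingMap.zero_apply]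
  rw [← Fin.insertNth_self_removeNth k v, AlternatingMap.map_insertNth, hk, h_cons, smul_zero]

/-- The inverse of `AlternatingMap.curryLeft`: a linear family `f` of alternating maps with
`f X v = 0` whenever `X` occurs in `v` is an alternating map in one more variable. -/
def uncurryLeft (f : L →ₗ[R] L [⋀^Fin n]→ₗ[R] M) (hf : ∀ X v k, v k = X → f X v = 0) :
    L [⋀^Fin (n + 1)]→ₗ[R] M where
  toMultilinearMap := LinearMap.uncurryLeft (AlternatingMap.toMultilinearMapLM ∘ₗ f)
  map_eq_zero_of_eq' v i j hv hij := by
    change f (v 0) (Fin.tail v) = 0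
    cases i using Fin.cases with
    | zero =>
      obtain ⟨j, rfl⟩ := Fin.exists_succ_eq.2 hij.symm
      exact hf _ _ j hv.symm
    | succ i =>
      cases j using Fin.cases with
      | zero => exact hf _ _ i hv
      | succ j => exact (f (v 0)).map_eq_zero_of_eq _ hv fun h => hij (congrArg Fin.succ h)

@[simp]
lemma curryLeft_uncurryLeft (f : L →ₗ[R] L [⋀^Fin n]→ₗ[R] M)
    (hf : ∀ X v k, v k = X → f X v = 0) : (uncurryLeft f hf).curryLeft = f :=
  rfl

lemma neg_one_pow_smul_map_cons_removeNth (σ : L [⋀^Fin (n + 1)]→ₗ[R] M) (X : L)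
    (v : Fin (n + 1) → L) (k : Fin (n + 1)) :
    ((-1 : ℤ) ^ (k : ℕ)) • σ (Fin.cons X (k.removeNth v)) = σ (Function.update v k X) := by
  rw [← Fin.insertNth_removeNth, AlternatingMap.map_insertNth, Matrix.vecCons]

section Insertion

variable {ι : Type*} [DecidableEq ι]

lemma update_id_apply (B : Module.End R L) (v : ι → L) (k : ι) :
    (fun l => (Function.update (fun _ => LinearMap.id) k B : ι → L →ₗ[R] L) l (v l)) =
      Function.update v k (B (v k)) := by
  ext l
  by_cases h : l = k
  · subst h; simp
  · simp [h]

variable [Fintype ι]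

lemma sum_map_update_eq_zero_of_eq (B : Module.End R L) (σ : L [⋀^ι]→ₗ[R] M) {v : ι → L} {i j : ι}
    (hv : v i = v j) (hij : i ≠ j) : ∑ k, σ (Function.update v k (B (v k))) = 0 := by
  have h_other : ∀ k, k ≠ i ∧ k ≠ j → σ (Function.update v k (B (v k))) = 0 := fun k hk =>
    σ.map_eq_zero_of_eq _ (by simpa [Function.update_of_ne, hk.1.symm, hk.2.symm]) hij
  have h_inv : v ∘ Equiv.swap i j = v := by
    rw [Equiv.comp_swap_eq_update, hv, Function.update_eq_self, ← hv, Function.update_eq_self]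
  have h_swap : Function.update v i (B (v i)) ∘ Equiv.swap i j = Function.update v j (B (v j)) := by
    rw [Function.update_comp_equiv, Equiv.symm_swap, Equiv.swap_apply_left, h_inv, hv]
  rw [Fintype.sum_eq_add i j hij h_other, ← h_swap, σ.map_swap _ hij, add_neg_cancel]

/-- The insertion operator `i_B` of an endomorphism `B`, the derivation extending `B` to
alternating maps: `(i_B σ)(v₁, …, vₚ) = ∑ₖ σ(v₁, …, B vₖ, …, vₚ)`. -/
def insertion : Module.End R L →ₗ[R] (L [⋀^ι]→ₗ[R] M) →ₗ[R] L [⋀^ι]→ₗ[R] M :=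
  LinearMap.mk₂ R
    (fun B σ =>
      { ∑ k, σ.toMultilinearMap.compLinearMap (Function.update (fun _ => LinearMap.id) k B) with
        map_eq_zero_of_eq' v i j hv hij := by
          refine Eq.trans ?_ (sum_map_update_eq_zero_of_eq B σ hv hij)
          simp [update_id_apply] })
    (fun B C σ => by ext v; simp [update_id_apply, Finset.sum_add_distrib])
    (fun c B σ => by ext v; simp [update_id_apply, Finset.smul_sum])
    (fun B σ τ => by ext v; simp [Finset.sum_add_distrib])
    (fun B c σ => by ext v; simp [Finset.smul_sum])

lemma insertion_apply (B : Module.End R L) (σ : L [⋀^ι]→ₗ[R] M) (v : ι → L) :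
    insertion B σ v = ∑ k, σ (Function.update v k (B (v k))) := by
  simp [insertion, update_id_apply]

lemma insertion_compAlternatingMap {N : Type*} [AddCommGroup N] [Module R N] (B : Module.End R L)
    (f : M →ₗ[R] N) (σ : L [⋀^ι]→ₗ[R] M) :
    insertion B (f.compAlternatingMap σ) = f.compAlternatingMap (insertion B σ) := by
  ext v
  simp [insertion_apply]

lemma insertion_compLinearMap (B : Module.End R L) {S T : Module.End R L} (hST : S * T = 1)
    (σ : L [⋀^ι]→ₗ[R] M) :
    (insertion B (σ.compLinearMap S)).compLinearMap T = insertion (S * B * T) σ := by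
  ext v
  have hST' : ∀ x, S (T x) = x := LinearMap.congr_fun hST
  simp only [AlternatingMap.compLinearMap_apply, insertion_apply]
  refine Finset.sum_congr rfl fun k _ => congrArg σ (funext fun l => ?_)
  by_cases hl : l = k
  · subst hl; simp
  · simp [hl, hST']

end Insertion

lemma curryLeft_insertion (B : Module.End R L) (σ : L [⋀^Fin (n + 1)]→ₗ[R] M) (X : L) :
    (insertion B σ).curryLeft X = insertion B (σ.curryLeft X) + σ.curryLeft (B X) := by
  ext v
  simp only [AlternatingMap.curryLeft_apply_apply, AlternatingMap.add_apply, insertion_apply,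
    Fin.sum_univ_succ, Matrix.vecCons, Fin.cons_zero, Fin.cons_succ, Fin.update_cons_zero,
    ← Fin.cons_update]
  exact add_comm _ _

lemma insertion_insertion (B C : Module.End R L) (σ : L [⋀^Fin n]→ₗ[R] M) :
    insertion B (insertion C σ) = insertion C (insertion B σ) + insertion ⁅C, B⁆ σ := by
  induction n with
  | zero => ext v; simp [insertion_apply]
  | succ n ih =>
    refine ext_curryLeft fun X => ?_
    simp only [curryLeft_insertion, AlternatingMap.curryLeft_add, curryLeft_sub,
      LinearMap.add_apply, LinearMap.sub_apply, map_add, map_sub, ih, Ring.lie_def,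
      Module.End.mul_apply]
    abel

end AlternatingMaps

section LieAlgebra

variable {R L M : Type*} [CommRing R] [LieRing L] [LieAlgebra R L] [AddCommGroup M] [Module R M]
  [LieRingModule L M] [LieModule R L M] {n : ℕ}

open LieAlgebra LieModule

/-- The Lie derivative of alternating maps `L^ι → M` with values in a Lie module, given by
`(ℒ_X σ)(v) = ⁅X, σ(v)⁆ - ∑ₖ σ(v₁, …, ⁅X, vₖ⁆, …, vₚ)`. -/
def lieDerivative {ι : Type*} [Fintype ι] [DecidableEq ι] :
    L →ₗ[R] (L [⋀^ι]→ₗ[R] M) →ₗ[R] L [⋀^ι]→ₗ[R] M :=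
  LinearMap.mk₂ R (fun X σ => (toEnd R L M X).compAlternatingMap σ - insertion (ad R L X) σ)
    (fun X Y σ => by
      simp only [map_add, LinearMap.add_apply, LinearMap.add_compAlternatingMap]
      abel)
    (fun c X σ => by ext v; simp [smul_sub])
    (fun X σ τ => by
      simp only [map_add, LinearMap.compAlternatingMap_add]
      abel)
    (fun c X σ => by ext v; simp [smul_sub])

lemma lieDerivative_eq {ι : Type*} [Fintype ι] [DecidableEq ι] (X : L) (σ : L [⋀^ι]→ₗ[R] M) :
    lieDerivative X σ = (toEnd R L M X).compAlternatingMap σ - insertion (ad R L X) σ :=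
  rfl

lemma lieDerivative_apply {ι : Type*} [Fintype ι] [DecidableEq ι] (X : L) (σ : L [⋀^ι]→ₗ[R] M)
    (v : ι → L) :
    lieDerivative X σ v = ⁅X, σ v⁆ - ∑ k, σ (Function.update v k ⁅X, v k⁆) := by
  simp [lieDerivative_eq, insertion_apply]

lemma curryLeft_lieDerivative (X Y : L) (σ : L [⋀^Fin (n + 1)]→ₗ[R] M) :
    (lieDerivative X σ).curryLeft Y =
      lieDerivative X (σ.curryLeft Y) - σ.curryLeft ⁅X, Y⁆ := by
  simp only [lieDerivative_eq, curryLeft_sub, LinearMap.sub_apply, curryLeft_insertion,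
    AlternatingMap.curryLeft_compAlternatingMap, ad_apply]
  abel

lemma lieDerivative_insertion (X : L) (B : Module.End R L) (σ : L [⋀^Fin n]→ₗ[R] M) :
    lieDerivative X (insertion B σ) =
      insertion B (lieDerivative X σ) + insertion ⁅ad R L X, B⁆ σ := by
  simp only [lieDerivative_eq, map_sub, insertion_compAlternatingMap,
    insertion_insertion B (ad R L X) σ]
  abel

lemma lieDerivative_lie (X Y : L) (σ : L [⋀^Fin n]→ₗ[R] M) :
    lieDerivative ⁅X, Y⁆ σ =
      lieDerivative X (lieDerivative Y σ) - lieDerivative Y (lieDerivative X σ) := by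
  induction n with
  | zero => ext v; simp [lieDerivative_apply]
  | succ n ih =>
    refine ext_curryLeft fun Z => ?_
    simp only [curryLeft_lieDerivative, curryLeft_sub, LinearMap.sub_apply, map_sub, ih,
      lie_lie]
    abel

/-- One stage of the recursion defining `ceDifferential`, bundled with the instance of Cartan's
formula that makes the next stage alternating. -/
def ceDifferentialAux : (n : ℕ) →
    {d : (L [⋀^Fin n]→ₗ[R] M) →ₗ[R] L [⋀^Fin (n + 1)]→ₗ[R] M //
      ∀ σ X, (∀ v k, v k = X → σ v = 0) → (d σ).curryLeft X = lieDerivative X σ}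
  | 0 =>
    ⟨{  toFun σ := uncurryLeft (lieDerivative.flip σ) fun _ _ k => k.elim0
        map_add' σ τ := ext_curryLeft fun X => by simp
        map_smul' c σ := ext_curryLeft fun X => by simp },
      fun _ _ _ => rfl⟩
  | n + 1 =>
    ⟨{  toFun σ := uncurryLeft (lieDerivative.flip σ - (ceDifferentialAux n).1 ∘ₗ σ.curryLeft)
          fun X v k hk => by
            have h_cartan := (ceDifferentialAux n).2 (σ.curryLeft X) X fun _ _ =>
              curryLeft_apply_eq_zero_of_eq σ
            refine apply_eq_zero_of_curryLeft_eq_zero ?_ hk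
            simp [curryLeft_sub, curryLeft_lieDerivative, h_cartan]
        map_add' σ τ := ext_curryLeft fun X => by
          simp only [map_add, AlternatingMap.curryLeft_add, curryLeft_uncurryLeft,
            LinearMap.sub_apply, LinearMap.add_apply, LinearMap.flip_apply, LinearMap.comp_apply]
          abel
        map_smul' c σ := ext_curryLeft fun X => by simp [smul_sub] },
      fun σ X hσ => by
        have h_curry : σ.curryLeft X = 0 := by
          ext v
          exact hσ (Matrix.vecCons X v) 0 rfl
        simp [h_curry]⟩

/-- The Chevalley-Eilenberg differential on alternating maps with values in a Lie module, defined by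
recursion on the degree through Cartan's formula `ι_X ∘ d = ℒ_X - d ∘ ι_X`, where `ι_X` is
`AlternatingMap.curryLeft`. For derivations of an algebra it is the exterior derivative `koszulD`,
see `coe_ceDifferential`. -/
def ceDifferential : (L [⋀^Fin n]→ₗ[R] M) →ₗ[R] L [⋀^Fin (n + 1)]→ₗ[R] M :=
  (ceDifferentialAux n).1

lemma curryLeft_ceDifferential_zero (σ : L [⋀^Fin 0]→ₗ[R] M) (X : L) :
    (ceDifferential σ).curryLeft X = lieDerivative X σ :=
  rfl

lemma curryLeft_ceDifferential_succ (σ : L [⋀^Fin (n + 1)]→ₗ[R] M) (X : L) :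
    (ceDifferential σ).curryLeft X = lieDerivative X σ - ceDifferential (σ.curryLeft X) :=
  rfl

lemma lieDerivative_ceDifferential (X : L) (σ : L [⋀^Fin n]→ₗ[R] M) :
    lieDerivative X (ceDifferential σ) = ceDifferential (lieDerivative X σ) := by
  induction n with
  | zero =>
    refine ext_curryLeft fun Y => ?_
    simp only [curryLeft_lieDerivative, curryLeft_ceDifferential_zero, lieDerivative_lie]
    abel
  | succ n ih =>
    refine ext_curryLeft fun Y => ?_
    simp only [curryLeft_lieDerivative, curryLeft_ceDifferential_succ, lieDerivative_lie, map_sub,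
      ih]
    abel

lemma ceDifferential_ceDifferential (σ : L [⋀^Fin n]→ₗ[R] M) :
    ceDifferential (ceDifferential σ) = 0 := by
  induction n with
  | zero =>
    refine ext_curryLeft fun X => ?_
    simp [curryLeft_ceDifferential_succ, curryLeft_ceDifferential_zero,
      lieDerivative_ceDifferential]
  | succ n ih =>
    refine ext_curryLeft fun X => ?_
    simp [curryLeft_ceDifferential_succ, lieDerivative_ceDifferential, ih]

end LieAlgebra

section Nijenhuis

/-- The Nijenhuis torsion `⁅Φ X, Φ Y⁆ - Φ ⁅Φ X, Y⁆ - Φ ⁅X, Φ Y⁆ + Φ (Φ ⁅X, Y⁆)`, which is half of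
the Frölicher-Nijenhuis bracket `[Φ, Φ]` in the case of vector fields. -/
def nijenhuisTorsion {L : Type*} [LieRing L] (Φ : L → L) (X Y : L) : L :=
  ⁅Φ X, Φ Y⁆ - Φ ⁅Φ X, Y⁆ - Φ ⁅X, Φ Y⁆ + Φ (Φ ⁅X, Y⁆)

lemma nijenhuisTorsion_eq_zero_of_integrable {S L : Type*} [Ring S] [LieRing L] [Module S L]
    (Φ : Module.End S L) (ξ ζ : Submodule S L) (hξζ : Codisjoint ξ ζ)
    (hΦξ : ∀ X ∈ ξ, Φ X = 0) (hΦζ : ∀ X ∈ ζ, Φ X = X)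
    (hξ : ∀ X ∈ ξ, ∀ Y ∈ ξ, ⁅X, Y⁆ ∈ ξ) (hζ : ∀ X ∈ ζ, ∀ Y ∈ ζ, ⁅X, Y⁆ ∈ ζ) (X Y : L) :
    nijenhuisTorsion Φ X Y = 0 := by
  have h_idem : ∀ Z, Φ (Φ Z) = Φ Z := fun Z => by
    obtain ⟨a, b, ha, hb, rfl⟩ := Submodule.codisjoint_iff_exists_add_eq.1 hξζ Z
    simp [hΦξ a ha, hΦζ b hb]
  obtain ⟨a, b, ha, hb, rfl⟩ := Submodule.codisjoint_iff_exists_add_eq.1 hξζ X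
  obtain ⟨c, d, hc, hd, rfl⟩ := Submodule.codisjoint_iff_exists_add_eq.1 hξζ Y
  simp only [nijenhuisTorsion, map_add, hΦξ a ha, hΦξ c hc, hΦζ b hb, hΦζ d hd, zero_add,
    add_lie, lie_add, h_idem, hΦξ _ (hξ a ha c hc), hΦζ _ (hζ b hb d hd)]
  abel

end Nijenhuis

section Deformation

variable {R L M : Type*} [CommRing R] [LieRing L] [LieAlgebra R L] [AddCommGroup M] [Module R M]
  [LieRingModule L M] [LieModule R L M] {n : ℕ}

open LieAlgebra LieModule

/-- The deformed differential `d_Φ = R_Φ ∘ d ∘ R_Φ⁻¹`, where `R_Φ` is the slotwise action of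
`1 + Φ` and `Ψ` stands for the inverse of `1 + Φ`. -/
def deformedDifferential (Φ Ψ : Module.End R L) (σ : L [⋀^Fin n]→ₗ[R] M) :
    L [⋀^Fin (n + 1)]→ₗ[R] M :=
  (ceDifferential (σ.compLinearMap Ψ)).compLinearMap (1 + Φ)

lemma conj_ad_eq_of_nijenhuisTorsion_eq_zero {Φ Ψ : Module.End R L} (hΨ : Ψ * (1 + Φ) = 1)
    (hΦ : ∀ X Y, nijenhuisTorsion Φ X Y = 0) (X : L) :
    Ψ * ad R L (X + Φ X) * (1 + Φ) = ad R L X + ad R L (Φ X) + ⁅ad R L X, Φ⁆ := by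
  ext Y
  have h_bracket : ⁅X + Φ X, Y + Φ Y⁆ =
      (1 + Φ) (⁅X, Y⁆ + ⁅Φ X, Y⁆ + (⁅X, Φ Y⁆ - Φ ⁅X, Y⁆)) := by
    rw [← sub_eq_zero, ← hΦ X Y]
    simp only [nijenhuisTorsion, lie_add, add_lie, LinearMap.add_apply, Module.End.one_apply,
      map_add, map_sub]
    abel
  calc
    Ψ ⁅X + Φ X, Y + Φ Y⁆ = (Ψ * (1 + Φ)) (⁅X, Y⁆ + ⁅Φ X, Y⁆ + (⁅X, Φ Y⁆ - Φ ⁅X, Y⁆)) := by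
      rw [h_bracket, Module.End.mul_apply]
    _ = ⁅X, Y⁆ + ⁅Φ X, Y⁆ + (⁅X, Φ Y⁆ - Φ ⁅X, Y⁆) := by rw [hΨ, Module.End.one_apply]

lemma lieDerivative_conj_of_nijenhuisTorsion_eq_zero {ι : Type*} [Fintype ι] [DecidableEq ι]
    {Φ Ψ : Module.End R L} (hΨ : Ψ * (1 + Φ) = 1)
    (hΦ : ∀ X Y, nijenhuisTorsion Φ X Y = 0) (X : L) (σ : L [⋀^ι]→ₗ[R] M) :
    (lieDerivative (X + Φ X) (σ.compLinearMap Ψ)).compLinearMap (1 + Φ) =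
      lieDerivative X σ + lieDerivative (Φ X) σ - insertion ⁅ad R L X, Φ⁆ σ := by
  have h_act : ((toEnd R L M (X + Φ X)).compAlternatingMap (σ.compLinearMap Ψ)).compLinearMap
      (1 + Φ) = (toEnd R L M (X + Φ X)).compAlternatingMap σ := by
    ext v
    exact congrArg (fun w => ⁅X + Φ X, σ w⁆) (funext fun k => LinearMap.congr_fun hΨ (v k))
  have h_ins : (insertion (ad R L (X + Φ X)) (σ.compLinearMap Ψ)).compLinearMap (1 + Φ) =
      insertion (ad R L X) σ + insertion (ad R L (Φ X)) σ + insertion ⁅ad R L X, Φ⁆ σ := by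
    rw [insertion_compLinearMap _ hΨ, conj_ad_eq_of_nijenhuisTorsion_eq_zero hΨ hΦ]
    simp only [map_add, LinearMap.add_apply]
  rw [lieDerivative_eq, sub_compLinearMap, h_act, h_ins]
  simp only [lieDerivative_eq, map_add, LinearMap.add_compAlternatingMap]
  abel

lemma curryLeft_deformedDifferential_zero (Φ Ψ : Module.End R L) (σ : L [⋀^Fin 0]→ₗ[R] M)
    (X : L) :
    (deformedDifferential Φ Ψ σ).curryLeft X =
      (lieDerivative (X + Φ X) (σ.compLinearMap Ψ)).compLinearMap (1 + Φ) := by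
  rw [deformedDifferential, AlternatingMap.curryLeft_compLinearMap, curryLeft_ceDifferential_zero]
  rfl

lemma curryLeft_deformedDifferential_succ {Φ Ψ : Module.End R L} (hΨ : Ψ * (1 + Φ) = 1)
    (σ : L [⋀^Fin (n + 1)]→ₗ[R] M) (X : L) :
    (deformedDifferential Φ Ψ σ).curryLeft X =
      (lieDerivative (X + Φ X) (σ.compLinearMap Ψ)).compLinearMap (1 + Φ) -
        deformedDifferential Φ Ψ (σ.curryLeft X) := by
  have h_inv : Ψ ((1 + Φ) X) = X := LinearMap.congr_fun hΨ X
  rw [deformedDifferential, AlternatingMap.curryLeft_compLinearMap, curryLeft_ceDifferential_succ,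
    AlternatingMap.curryLeft_compLinearMap, h_inv, sub_compLinearMap]
  rfl

/-- With `L_Φ = [i_Φ, d]`, this says that `d_Φ - d = L_Φ`. -/
lemma deformedDifferential_eq {Φ Ψ : Module.End R L} (hΨ : Ψ * (1 + Φ) = 1)
    (hΦ : ∀ X Y, nijenhuisTorsion Φ X Y = 0) (σ : L [⋀^Fin n]→ₗ[R] M) :
    deformedDifferential Φ Ψ σ = ceDifferential σ +
      (insertion Φ (ceDifferential σ) - ceDifferential (insertion Φ σ)) := by
  induction n with
  | zero =>
    refine ext_curryLeft fun X => ?_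
    simp only [curryLeft_deformedDifferential_zero,
      lieDerivative_conj_of_nijenhuisTorsion_eq_zero hΨ hΦ, AlternatingMap.curryLeft_add,
      curryLeft_sub, LinearMap.add_apply, LinearMap.sub_apply, curryLeft_insertion,
      curryLeft_ceDifferential_zero, lieDerivative_insertion]
    abel
  | succ n ih =>
    refine ext_curryLeft fun X => ?_
    rw [curryLeft_deformedDifferential_succ hΨ, ih,
      lieDerivative_conj_of_nijenhuisTorsion_eq_zero hΨ hΦ]
    simp only [AlternatingMap.curryLeft_add, curryLeft_sub, LinearMap.add_apply,
      LinearMap.sub_apply, curryLeft_insertion, curryLeft_ceDifferential_succ,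
      lieDerivative_insertion, map_add, map_sub]
    abel

theorem deformed_differential_anticommutes_with_d_general {Φ Ψ : Module.End R L}
    (hΨ : Ψ * (1 + Φ) = 1) (hΦ : ∀ X Y, nijenhuisTorsion Φ X Y = 0)
    (σ : L [⋀^Fin n]→ₗ[R] M) :
    ceDifferential (deformedDifferential Φ Ψ σ) +
      deformedDifferential Φ Ψ (ceDifferential σ) = 0 := by
  simp [deformedDifferential_eq hΨ hΦ, ceDifferential_ceDifferential]

end Deformation

section Derivations

variable {n : ℕ}

/-- The `(i, j)` summand of the bracket part of `koszulD σ v`, with the value `0` for `i ≥ j`. -/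
def koszulBracketTerm {p : ℕ} (σ : Form A p) (v : Fin (p + 1) → Derivation ℝ A A)
    (i j : Fin (p + 1)) : A :=
  if h : (i : ℕ) < (j : ℕ) then
    ((-1 : ℤ) ^ (j : ℕ)) •
      σ (Function.update (v ∘ j.succAbove)
        ⟨(i : ℕ), lt_of_lt_of_le h (Nat.lt_succ_iff.mp j.isLt)⟩ ⁅v i, v j⁆)
  else 0

lemma koszulD_apply {p : ℕ} (σ : Form A p) (v : Fin (p + 1) → Derivation ℝ A A) :
    koszulD σ v = ∑ i : Fin (p + 1), ((-1 : ℤ) ^ (i : ℕ)) • (v i) (σ (v ∘ i.succAbove)) +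
      ∑ j, ∑ i, koszulBracketTerm σ v i j :=
  rfl

lemma koszulBracketTerm_zero_right {p : ℕ} (σ : Form A p) (v : Fin (p + 1) → Derivation ℝ A A)
    (i : Fin (p + 1)) : koszulBracketTerm σ v i 0 = 0 :=
  dif_neg (Nat.not_lt_zero _)

lemma koszulBracketTerm_cons_zero_succ (σ : Derivation ℝ A A [⋀^Fin (n + 1)]→ₗ[ℝ] A)
    (X : Derivation ℝ A A) (v : Fin (n + 1) → Derivation ℝ A A) (j : Fin (n + 1)) :
    koszulBracketTerm σ (Fin.cons X v) 0 j.succ = -σ (Function.update v j ⁅X, v j⁆) := by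
  have h_update : Function.update (Fin.cons X (j.removeNth v) : Fin (n + 1) → _) 0 ⁅X, v j⁆ =
      Fin.cons ⁅X, v j⁆ (j.removeNth v) := Fin.update_cons_zero _ _ _
  calc
    koszulBracketTerm σ (Fin.cons X v) 0 j.succ =
        ((-1 : ℤ) ^ (j + 1 : ℕ)) •
          σ (Function.update (Fin.cons X (j.removeNth v) : Fin (n + 1) → _) 0 ⁅X, v j⁆) := by
      rw [koszulBracketTerm, dif_pos (by simp), Fin.cons_comp_succ_succAbove]
      rfl
    _ = -σ (Function.update v j ⁅X, v j⁆) := by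
      rw [h_update, pow_succ, mul_neg_one, neg_smul, neg_one_pow_smul_map_cons_removeNth]

lemma koszulBracketTerm_cons_succ_succ (σ : Derivation ℝ A A [⋀^Fin (n + 1)]→ₗ[ℝ] A)
    (X : Derivation ℝ A A) (v : Fin (n + 1) → Derivation ℝ A A) (i j : Fin (n + 1)) :
    koszulBracketTerm σ (Fin.cons X v) i.succ j.succ =
      -koszulBracketTerm (σ.curryLeft X) v i j := by
  by_cases hij : (i : ℕ) < (j : ℕ)
  · have h_update := Fin.cons_update (α := fun _ => Derivation ℝ A A) X (j.removeNth v)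
      ⟨i, lt_of_lt_of_le hij (Nat.lt_succ_iff.mp j.isLt)⟩ ⁅v i, v j⁆
    have h_sign : (-1 : ℤ) ^ (j.succ : ℕ) = -(-1) ^ (j : ℕ) := by
      rw [Fin.val_succ, pow_succ, mul_neg_one]
    rw [koszulBracketTerm, koszulBracketTerm, dif_pos hij, dif_pos (by simpa using hij),
      Fin.cons_comp_succ_succAbove, h_sign, neg_smul]
    exact congrArg (fun w => -((-1 : ℤ) ^ (j : ℕ) • σ w)) h_update.symm
  · rw [koszulBracketTerm, koszulBracketTerm, dif_neg hij, dif_neg (by simpa using hij), neg_zero]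

lemma koszulD_cons_zero (σ : Derivation ℝ A A [⋀^Fin 0]→ₗ[ℝ] A) (X : Derivation ℝ A A)
    (v : Fin 0 → Derivation ℝ A A) : koszulD σ (Fin.cons X v) = lieDerivative X σ v := by
  simp [koszulD_apply, koszulBracketTerm, lieDerivative_apply]

lemma koszulD_cons_succ (σ : Derivation ℝ A A [⋀^Fin (n + 1)]→ₗ[ℝ] A) (X : Derivation ℝ A A)
    (v : Fin (n + 1) → Derivation ℝ A A) :
    koszulD σ (Fin.cons X v) = lieDerivative X σ v - koszulD (σ.curryLeft X) v := by
  have h_action (i : Fin (n + 1)) :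
      ((-1 : ℤ) ^ (i.succ : ℕ)) • (v i)
        (σ ((Fin.cons X v : Fin (n + 2) → Derivation ℝ A A) ∘ i.succ.succAbove)) =
      -(((-1 : ℤ) ^ (i : ℕ)) • (v i) (σ.curryLeft X (v ∘ i.succAbove))) := by
    rw [Fin.cons_comp_succ_succAbove, Fin.val_succ, pow_succ, mul_neg_one, neg_smul]
    rfl
  have h_tail : (Fin.cons X v : Fin (n + 2) → Derivation ℝ A A) ∘ Fin.succAbove 0 = v := by
    ext1 k
    simp
  simp only [koszulD_apply, lieDerivative_apply, Fin.sum_univ_succ (n := n + 1), Fin.cons_zero,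
    Fin.cons_succ, Fin.val_zero, pow_zero, one_smul, zero_add, Derivation.bracket_eq_fun, h_action,
    koszulBracketTerm_zero_right, Finset.sum_const_zero, koszulBracketTerm_cons_zero_succ,
    koszulBracketTerm_cons_succ_succ, h_tail, Finset.sum_add_distrib, Finset.sum_neg_distrib]
  abel

lemma coe_ceDifferential (σ : Derivation ℝ A A [⋀^Fin n]→ₗ[ℝ] A) :
    ⇑(ceDifferential σ) = koszulD σ := by
  funext v
  induction n with
  | zero =>
    rw [← Fin.cons_self_tail v, koszulD_cons_zero, ← curryLeft_ceDifferential_zero]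
    rfl
  | succ n ih =>
    rw [← Fin.cons_self_tail v, koszulD_cons_succ, ← ih, ← AlternatingMap.sub_apply,
      ← curryLeft_ceDifferential_succ]
    rfl

lemma coe_deformedDifferential (Φ Ψ : Module.End ℝ (Derivation ℝ A A))
    (σ : Derivation ℝ A A [⋀^Fin n]→ₗ[ℝ] A) :
    ⇑(deformedDifferential Φ Ψ σ) =
      slotwise (fun x => x + Φ x) (koszulD (slotwise (fun x => Ψ x) σ)) := by
  have h_inner : ⇑(σ.compLinearMap Ψ) = slotwise (fun x => Ψ x) σ := rfl
  rw [← h_inner, ← coe_ceDifferential]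
  rfl

end Derivations

/-- Let `Φ ∈ End(TM)` with `R_Φ = Id + Φ` invertible (with inverse
`Ψi`), `Φ` the projection onto `ζ` along `ξ` for a decomposition `TM = ξ ⊕ ζ`
with both `ξ` and `ζ` integrable. Then the deformed differential
`d_Φ = R_Φ ∘ d ∘ R_Φ⁻¹` (with `R_Φ` acting slotwise on forms) anticommutes with
`d`: `[d, d_Φ] = d d_Φ + d_Φ d = 0` on every (A-multilinear alternating) form. -/
theorem deformed_differential_anticommutes_with_d
    (Φ Ψi : Module.End A (Derivation ℝ A A))
    (hinv₁ : ∀ x, Ψi (x + Φ x) = x)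
    (hinv₂ : ∀ x, Ψi x + Φ (Ψi x) = x)
    (ξ ζ : Submodule A (Derivation ℝ A A)) (hcompl : IsCompl ξ ζ)
    (hΦξ : ∀ x ∈ ξ, Φ x = 0) (hΦζ : ∀ x ∈ ζ, Φ x = x)
    (hξ : ∀ X ∈ ξ, ∀ Y ∈ ξ, ⁅X, Y⁆ ∈ ξ)
    (hζ : ∀ X ∈ ζ, ∀ Y ∈ ζ, ⁅X, Y⁆ ∈ ζ)
    (p : ℕ) (σ : Form A p)
    (hmul : ∀ (u : Fin p → Derivation ℝ A A) (k : Fin p) (a : A)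
        (x y : Derivation ℝ A A),
      σ (Function.update u k (a • x + y)) =
        a * σ (Function.update u k x) + σ (Function.update u k y))
    (halt : ∀ (u : Fin p → Derivation ℝ A A) (k l : Fin p),
      k ≠ l → u k = u l → σ u = 0)
    (v : Fin (p + 2) → Derivation ℝ A A) :
    koszulD (slotwise (fun x => x + Φ x) (koszulD (slotwise (fun x => Ψi x) σ))) v
      + slotwise (fun x => x + Φ x)
          (koszulD (slotwise (fun x => Ψi x) (koszulD σ))) v = 0 := by
  have h_smulAdd (u : Fin p → Derivation ℝ A A) (k : Fin p) (c : ℝ) (x y : Derivation ℝ A A) :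
      σ (Function.update u k (c • x + y)) =
        c • σ (Function.update u k x) + σ (Function.update u k y) := by
    simpa [Algebra.smul_def] using hmul u k (algebraMap ℝ A c) x y
  have hΨ : Ψi.restrictScalars ℝ * (1 + Φ.restrictScalars ℝ) = 1 := LinearMap.ext hinv₁
  have hΦ := nijenhuisTorsion_eq_zero_of_integrable Φ ξ ζ hcompl.codisjoint hΦξ hΦζ hξ hζ
  have h_anti := deformed_differential_anticommutes_with_d_general (M := A) hΨ hΦ
    (alternatingMapOfSmulAdd σ h_smulAdd halt)
  simpa only [AlternatingMap.add_apply, AlternatingMap.zero_apply, coe_ceDifferential,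
    coe_deformedDifferential, coe_alternatingMapOfSmulAdd, LinearMap.coe_restrictScalars]
    using DFunLike.congr_fun h_anti v

end Stmt19
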